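/- For every n ≥ 1, the hypergraph of the voting model with logical or ratio semantics—with vertex set {Q, T_1, …, T_n, F_1, …, F_n} and hyperedges {T_i} and {F_i} for each i = 1, …, n together with the two hyperedges {Q, T_1, …, T_n} and {Q, F_1, …, F_n}—has hierarchy width exactly 3. -/

import Mathlib

/-- Connectivity relation between hyperedges within the edge set `E` of a hypergraph whose
hyperedges have vertex sets given by `dep`. -/
def EdgeConn {α ι : Type*} (dep : ι → Finset α) (E : Finset ι) : ι → ι → Prop :=
  Relation.ReflTransGen fun a b => a ∈ E ∧ b ∈ E ∧ ∃ v, v ∈ dep a ∧ v ∈ dep b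

open Classical in
/-- Hierarchy width of the hypergraph with hyperedges `E`, where hyperedge `e` consists of
the vertices `dep e`: `0` if there are no hyperedges; `1 +` the minimum over single-edge
removals for a connected hypergraph; the maximum over connected components otherwise. -/
noncomputable def hw {α ι : Type*} [DecidableEq ι] (dep : ι → Finset α) (E : Finset ι) : ℕ :=
  E.sup fun e =>
    1 + ((E.filter fun f => EdgeConn dep E e f).attach.inf fun f =>
      ((hw dep ((E.filter fun f => EdgeConn dep E e f).erase f.1) : ℕ∞))).toNat
termination_by E.card
decreasing_by
  exact lt_of_lt_of_le (Finset.card_erase_lt_of_mem f.2)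
    (Finset.card_le_card (Finset.filter_subset _ _))

/-- The hyperedges of the voting model with logical or ratio semantics.  The vertices are
`none` (the query `Q`) and `some (true, i)` (the voter `T i`), `some (false, i)` (the voter
`F i`).  The hyperedge `Sum.inl true` is `φ_T = {Q, T_1, …, T_n}`, the hyperedge
`Sum.inl false` is `φ_F = {Q, F_1, …, F_n}`, and `Sum.inr (b, i)` is the singleton prior
hyperedge `{T i}` (for `b = true`) or `{F i}` (for `b = false`). -/
def votingDepLR (n : ℕ) : Bool ⊕ (Bool × Fin n) → Finset (Option (Bool × Fin n))
  | Sum.inl b => insert none (Finset.univ.image fun i : Fin n => some (b, i))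
  | Sum.inr (b, i) => {some (b, i)}

/-!
Width is monotone in the edge set, drops by at most one when a hyperedge is removed, and is at most
`1` exactly when the hyperedges are pairwise disjoint. The prior hyperedges are pairwise disjoint,
so putting back `φ_T` and `φ_F` gives width at most `3`.

For the lower bound, a component containing two disjoint edge sets of width `2` has width at least
`3`, because removing one hyperedge leaves one of the two sets intact. The sets `{φ_T, {T_1}}` and
`{φ_F, {F_1}}` are such a pair, joined through the query `Q`.
-/

theorem toNat_inf_natCast_le_iff {β : Type*} {s : Finset β} {k : ℕ} (hs : s.Nonempty)
    (w : β → ℕ) : (s.inf fun b => (w b : ℕ∞)).toNat ≤ k ↔ ∃ b ∈ s, w b ≤ k := by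
  obtain ⟨m, hm, hmin⟩ := s.exists_mem_eq_inf hs fun b => (w b : ℕ∞)
  rw [hmin, ENat.toNat_natCast]
  refine ⟨fun h => ⟨m, hm, h⟩, fun ⟨b, hb, hbk⟩ => le_trans ?_ hbk⟩
  exact Nat.cast_le.1 (hmin ▸ Finset.inf_le hb)

open Classical in
/-- The connected component of the hyperedge `e` in the hypergraph with hyperedges `E`, as a set of
hyperedges; it is empty when `e ∉ E`. -/
noncomputable def edgeComponent {α ι : Type*} (dep : ι → Finset α) (E : Finset ι) (e : ι) :
    Finset ι :=
  E.filter fun f => EdgeConn dep E e f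

section Hypergraph

variable {α ι : Type*} {dep : ι → Finset α} {E F A B : Finset ι} {e f g : ι} {k : ℕ}

theorem EdgeConn.mono (hEF : E ⊆ F) (h : EdgeConn dep E e f) : EdgeConn dep F e f :=
  Relation.ReflTransGen.mono (fun _ _ ⟨ha, hb, hmeet⟩ => ⟨hEF ha, hEF hb, hmeet⟩) _ _ h

theorem EdgeConn.eq_of_pairwiseDisjoint (hE : (E : Set ι).PairwiseDisjoint dep)
    (h : EdgeConn dep E e f) : f = e := by
  induction h with
  | refl => rfl
  | tail _ hstep ih =>
    obtain ⟨ha, hb, hmeet⟩ := hstep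
    exact (hE.elim ha hb (Finset.not_disjoint_iff.2 hmeet)).symm.trans ih

theorem mem_edgeComponent : f ∈ edgeComponent dep E e ↔ f ∈ E ∧ EdgeConn dep E e f := by
  classical exact Finset.mem_filter

theorem edgeComponent_subset : edgeComponent dep E e ⊆ E :=
  fun _ hf => (mem_edgeComponent.1 hf).1

theorem self_mem_edgeComponent (he : e ∈ E) : e ∈ edgeComponent dep E e :=
  mem_edgeComponent.2 ⟨he, .refl⟩

theorem mem_edgeComponent_of_not_disjoint (hf : f ∈ edgeComponent dep E e) (hg : g ∈ E)
    (hfg : ¬Disjoint (dep f) (dep g)) : g ∈ edgeComponent dep E e := by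
  obtain ⟨hfE, hef⟩ := mem_edgeComponent.1 hf
  exact mem_edgeComponent.2 ⟨hg, hef.tail ⟨hfE, hg, Finset.not_disjoint_iff.1 hfg⟩⟩

theorem edgeComponent_mono (hEF : E ⊆ F) : edgeComponent dep E e ⊆ edgeComponent dep F e :=
  fun _ hf => have ⟨hfE, hef⟩ := mem_edgeComponent.1 hf
    mem_edgeComponent.2 ⟨hEF hfE, hef.mono hEF⟩

theorem edgeComponent_eq_singleton (hE : (E : Set ι).PairwiseDisjoint dep) (he : e ∈ E) :
    edgeComponent dep E e = {e} :=
  Finset.eq_singleton_iff_unique_mem.2 ⟨self_mem_edgeComponent he,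
    fun _ hf => (mem_edgeComponent.1 hf).2.eq_of_pairwiseDisjoint hE⟩

variable [DecidableEq ι]

theorem hw_eq_sup_edgeComponent :
    hw dep E = E.sup fun e => 1 + ((edgeComponent dep E e).attach.inf fun f =>
      (hw dep ((edgeComponent dep E e).erase f) : ℕ∞)).toNat := by
  rw [hw]
  rfl

theorem hw_eq_zero_iff : hw dep E = 0 ↔ E = ∅ := by
  rw [hw_eq_sup_edgeComponent, ← Nat.bot_eq_zero, Finset.sup_eq_bot_iff]
  simp [Finset.eq_empty_iff_forall_notMem]

theorem hw_le_succ_iff : hw dep E ≤ k + 1 ↔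
    ∀ e ∈ E, ∃ f ∈ edgeComponent dep E e, hw dep ((edgeComponent dep E e).erase f) ≤ k := by
  rw [hw_eq_sup_edgeComponent, Finset.sup_le_iff]
  refine forall₂_congr fun e he => ?_
  have hne : (edgeComponent dep E e).attach.Nonempty :=
    Finset.attach_nonempty_iff.2 ⟨e, self_mem_edgeComponent he⟩
  rw [add_comm 1, Nat.add_le_add_iff_right, toNat_inf_natCast_le_iff hne]
  simp

theorem hw_mono (hEF : E ⊆ F) : hw dep E ≤ hw dep F := by
  suffices ∀ k (E F : Finset ι), E ⊆ F → hw dep F ≤ k → hw dep E ≤ k from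
    this _ E F hEF le_rfl
  intro k
  induction k with
  | zero =>
    intro E F hEF hF
    rw [Nat.le_zero, hw_eq_zero_iff] at hF ⊢
    exact Finset.subset_empty.1 (hF ▸ hEF)
  | succ k ih =>
    intro E F hEF hF
    refine hw_le_succ_iff.2 fun e he => ?_
    have hsub : edgeComponent dep E e ⊆ edgeComponent dep F e := edgeComponent_mono hEF
    obtain ⟨f, -, hf⟩ := hw_le_succ_iff.1 hF e (hEF he)
    by_cases hfE : f ∈ edgeComponent dep E e
    · exact ⟨f, hfE, ih _ _ (Finset.erase_subset_erase f hsub) hf⟩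
    · refine ⟨e, self_mem_edgeComponent he, ih _ _ ?_ hf⟩
      exact (Finset.erase_subset _ _).trans (Finset.subset_erase.2 ⟨hsub, hfE⟩)

theorem hw_le_hw_erase_add_one (a : ι) : hw dep E ≤ hw dep (E.erase a) + 1 := by
  refine hw_le_succ_iff.2 fun e he => ?_
  by_cases ha : a ∈ edgeComponent dep E e
  · exact ⟨a, ha, hw_mono (Finset.erase_subset_erase a edgeComponent_subset)⟩
  · refine ⟨e, self_mem_edgeComponent he, hw_mono ?_⟩
    exact (Finset.erase_subset _ _).trans (Finset.subset_erase.2 ⟨edgeComponent_subset, ha⟩)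

theorem hw_le_one_iff : hw dep E ≤ 1 ↔ (E : Set ι).PairwiseDisjoint dep := by
  rw [← zero_add 1, hw_le_succ_iff]
  simp only [Nat.le_zero, hw_eq_zero_iff]
  constructor
  · intro h e he f hf hne
    by_contra hmeet
    obtain ⟨g, -, hg⟩ := h e he
    have hcomp : edgeComponent dep E e ⊆ {g} := by
      simpa only [insert_empty_eq] using Finset.subset_insert_iff.2 hg.subset
    have heC : e ∈ edgeComponent dep E e := self_mem_edgeComponent he
    have hfC := mem_edgeComponent_of_not_disjoint heC hf hmeet
    exact hne ((Finset.mem_singleton.1 (hcomp heC)).trans (Finset.mem_singleton.1 (hcomp hfC)).symm)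
  · intro hE e he
    refine ⟨e, self_mem_edgeComponent he, ?_⟩
    rw [edgeComponent_eq_singleton hE he, Finset.erase_singleton]

theorem one_lt_hw_pair (hne : e ≠ f) (hef : ¬Disjoint (dep e) (dep f)) : 1 < hw dep {e, f} := by
  rw [← not_le, hw_le_one_iff]
  exact fun h => hef (h (by simp) (by simp) hne)

theorem succ_lt_hw_of_disjoint (he : e ∈ E) (hAE : A ⊆ edgeComponent dep E e)
    (hBE : B ⊆ edgeComponent dep E e) (hAB : Disjoint A B) (hA : k < hw dep A)
    (hB : k < hw dep B) : k + 1 < hw dep E := by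
  by_contra! hle
  obtain ⟨f, -, hf⟩ := hw_le_succ_iff.1 hle e he
  have mem_of_lt {S : Finset ι} (hSE : S ⊆ edgeComponent dep E e) (hS : k < hw dep S) : f ∈ S := by
    by_contra hfS
    exact ((hw_mono (Finset.subset_erase.2 ⟨hSE, hfS⟩)).trans hf).not_gt hS
  exact Finset.disjoint_left.1 hAB (mem_of_lt hAE hA) (mem_of_lt hBE hB)

end Hypergraph

section Voting

variable (n : ℕ)

theorem pairwiseDisjoint_votingDepLR_inr :
    (Set.range Sum.inr).PairwiseDisjoint (votingDepLR n) := by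
  rintro _ ⟨⟨b, i⟩, rfl⟩ _ ⟨⟨c, j⟩, rfl⟩ hne
  simpa [Function.onFun, votingDepLR] using hne

theorem not_disjoint_votingDepLR_inl_inl (b c : Bool) :
    ¬Disjoint (votingDepLR n (.inl b)) (votingDepLR n (.inl c)) :=
  Finset.not_disjoint_iff.2 ⟨none, by simp [votingDepLR], by simp [votingDepLR]⟩

theorem not_disjoint_votingDepLR_inl_inr (b : Bool) (i : Fin n) :
    ¬Disjoint (votingDepLR n (.inl b)) (votingDepLR n (.inr (b, i))) :=
  Finset.not_disjoint_iff.2 ⟨some (b, i), by simp [votingDepLR], by simp [votingDepLR]⟩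

theorem hw_votingDepLR_le : hw (votingDepLR n) Finset.univ ≤ 3 := by
  let priors : Finset (Bool ⊕ (Bool × Fin n)) := (Finset.univ.erase (.inl true)).erase (.inl false)
  have hsub : (priors : Set (Bool ⊕ (Bool × Fin n))) ⊆ Set.range Sum.inr := by
    rintro (_ | _ | _) <;> simp [priors]
  calc hw (votingDepLR n) Finset.univ
      ≤ hw (votingDepLR n) (Finset.univ.erase (.inl true)) + 1 := hw_le_hw_erase_add_one _
    _ ≤ hw (votingDepLR n) priors + 1 + 1 := by gcongr; exact hw_le_hw_erase_add_one _
    _ ≤ 1 + 1 + 1 := by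
      gcongr
      exact hw_le_one_iff.2 ((pairwiseDisjoint_votingDepLR_inr n).subset hsub)

theorem three_le_hw_votingDepLR (hn : 1 ≤ n) : 3 ≤ hw (votingDepLR n) Finset.univ := by
  let i : Fin n := ⟨0, hn⟩
  let side (b : Bool) : Finset (Bool ⊕ (Bool × Fin n)) := {.inl b, .inr (b, i)}
  have hwidth (b : Bool) : 1 < hw (votingDepLR n) (side b) :=
    one_lt_hw_pair Sum.inl_ne_inr (not_disjoint_votingDepLR_inl_inr n b i)
  have hcomp (b : Bool) :
      side b ⊆ edgeComponent (votingDepLR n) Finset.univ (.inl true) := by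
    have hfactor : .inl b ∈ edgeComponent (votingDepLR n) Finset.univ (.inl true) :=
      mem_edgeComponent_of_not_disjoint (self_mem_edgeComponent (Finset.mem_univ _))
        (Finset.mem_univ _) (not_disjoint_votingDepLR_inl_inl n true b)
    have hprior := mem_edgeComponent_of_not_disjoint hfactor (Finset.mem_univ _)
      (not_disjoint_votingDepLR_inl_inr n b i)
    exact Finset.insert_subset hfactor (Finset.singleton_subset_iff.2 hprior)
  have hdisj : Disjoint (side true) (side false) := by simp [side]
  exact succ_lt_hw_of_disjoint (Finset.mem_univ _) (hcomp true) (hcomp false) hdisj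
    (hwidth true) (hwidth false)

end Voting

/-- For every `n ≥ 1`, the hypergraph of the voting model with logical or ratio semantics
has hierarchy width exactly `3`. -/
theorem stmt9 (n : ℕ) (hn : 1 ≤ n) : hw (votingDepLR n) Finset.univ = 3 := by
  exact le_antisymm (hw_votingDepLR_le n) (three_le_hw_votingDepLR n hn)
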